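/- Let X and Y be measurable spaces each equipped with a partial order, μ a probability measure on X, and x ↦ κ_x a measurable family of probability measures on Y such that every κ_x satisfies the FKG inequality: for all bounded monotone measurable u, v : Y → ℝ, ∫ u v dκ_x ≥ (∫ u dκ_x)(∫ v dκ_x). Let w : X × Y → ℝ be a bounded nonnegative measurable function which is monotone for the product order, with ∫_X ∫_Y w(x,y) dκ_x(y) dμ(x) = 1. Then for every bounded measurable F : X × Y → ℝ which is monotone for the product order, ∫_X (∫_Y F(x,y′) dκ_x(y′)) · (∫_Y w(x,y) dκ_x(y)) dμ(x) ≤ ∫_X ∫_Y F(x,y) w(x,y) dκ_x(y) dμ(x). -/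

import Mathlib

open MeasureTheory ProbabilityTheory

/-- The FKG inequality for a measure `ν` on an ordered space: bounded monotone measurable functions
are nonnegatively correlated (positive association). No factor `ν univ` appears on the right-hand
side, so this is the usual notion when `ν` is a probability measure. -/
def SatisfiesFKG {Y : Type*} [MeasurableSpace Y] [Preorder Y] (ν : Measure Y) : Prop :=
  ∀ u v : Y → ℝ, Measurable u → Measurable v → Monotone u → Monotone v →
    (∃ C : ℝ, ∀ y, |u y| ≤ C) → (∃ C : ℝ, ∀ y, |v y| ≤ C) →
    (∫ y, u y ∂ν) * (∫ y, v y ∂ν) ≤ ∫ y, u y * v y ∂ν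

section KernelIntegral

variable {X Y : Type*} [MeasurableSpace X] [MeasurableSpace Y]

theorem exists_norm_integral_kernel_le {E : Type*} [NormedAddCommGroup E] [NormedSpace ℝ E]
    (κ : Kernel X Y) [IsFiniteKernel κ] {f : X → Y → E} (hf : ∃ C : ℝ, ∀ x y, ‖f x y‖ ≤ C) :
    ∃ C : ℝ, ∀ x, ‖∫ y, f x y ∂κ x‖ ≤ C := by
  obtain ⟨C, hC⟩ := hf
  refine ⟨|C| * κ.bound.toReal, fun x => ?_⟩
  calc ‖∫ y, f x y ∂κ x‖ ≤ |C| * (κ x).real Set.univ :=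
        norm_integral_le_of_norm_le_const <| .of_forall fun y => (hC x y).trans (le_abs_self C)
    _ ≤ |C| * κ.bound.toReal := by
        gcongr
        exact ENNReal.toReal_mono κ.bound_ne_top (κ.measure_le_bound x Set.univ)

theorem integrable_integral_kernel_of_compProd {E : Type*} [NormedAddCommGroup E] [NormedSpace ℝ E]
    {μ : Measure X} [SFinite μ] {κ : Kernel X Y} [IsSFiniteKernel κ] {f : X × Y → E}
    (hf : Integrable f (μ ⊗ₘ κ)) : Integrable (fun x => ∫ y, f (x, y) ∂κ x) μ := by
  simpa using Integrable.integral_compProd hf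

theorem integrable_integral_kernel_mul_integral_kernel {𝕜 : Type*} [RCLike 𝕜]
    {μ : Measure X} [SFinite μ] {κ : Kernel X Y} [IsFiniteKernel κ] {f g : X × Y → 𝕜}
    (hf : AEStronglyMeasurable f (μ ⊗ₘ κ)) (hf_bdd : ∃ C : ℝ, ∀ p, ‖f p‖ ≤ C)
    (hg : Integrable g (μ ⊗ₘ κ)) :
    Integrable (fun x => (∫ y, f (x, y) ∂κ x) * ∫ y, g (x, y) ∂κ x) μ := by
  have hf_int_meas : AEStronglyMeasurable (fun x => ∫ y, f (x, y) ∂κ x) μ := by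
    simpa using hf.integral_kernel_compProd
  obtain ⟨C, hC⟩ : ∃ C : ℝ, ∀ x, ‖∫ y, f (x, y) ∂κ x‖ ≤ C :=
    exists_norm_integral_kernel_le κ (hf_bdd.imp fun _ h x y => h (x, y))
  exact (integrable_integral_kernel_of_compProd hg).bdd_mul hf_int_meas (.of_forall hC)

end KernelIntegral


theorem resampling_stochastically_decreases_general
    {X Y : Type*} [MeasurableSpace X] [MeasurableSpace Y] [Preorder Y]
    (μ : Measure X) [SFinite μ] (κ : Kernel X Y) [IsFiniteKernel κ]
    (hFKG : ∀ᵐ x ∂μ, SatisfiesFKG (κ x))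
    (w : X × Y → ℝ) (hw : Measurable w) (hw_int : Integrable w (μ ⊗ₘ κ))
    (hw_bdd : ∀ x, ∃ C : ℝ, ∀ y, |w (x, y)| ≤ C) (hw_mono : ∀ x, Monotone fun y => w (x, y))
    (F : X × Y → ℝ) (hF : Measurable F) (hF_bdd : ∃ C : ℝ, ∀ p, |F p| ≤ C)
    (hF_mono : ∀ x, Monotone fun y => F (x, y)) :
    ∫ x, (∫ y', F (x, y') ∂κ x) * (∫ y, w (x, y) ∂κ x) ∂μ ≤
      ∫ x, ∫ y, F (x, y) * w (x, y) ∂κ x ∂μ := by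
  have hFw_int : Integrable (fun p => F p * w p) (μ ⊗ₘ κ) :=
    hw_int.bdd_mul hF.aestronglyMeasurable (.of_forall hF_bdd.choose_spec)
  have section_le : ∀ᵐ x ∂μ, (∫ y, F (x, y) ∂κ x) * (∫ y, w (x, y) ∂κ x) ≤
      ∫ y, F (x, y) * w (x, y) ∂κ x := by
    filter_upwards [hFKG] with x hx
    exact hx _ _ (hF.comp measurable_prodMk_left) (hw.comp measurable_prodMk_left)
      (hF_mono x) (hw_mono x) (hF_bdd.imp fun _ h y => h (x, y)) (hw_bdd x)
  exact integral_mono_ae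
    (integrable_integral_kernel_mul_integral_kernel hF.aestronglyMeasurable hF_bdd hw_int)
    (integrable_integral_kernel_of_compProd hFw_int) section_le

theorem resampling_stochastically_decreases
    {X Y : Type*} [MeasurableSpace X] [MeasurableSpace Y]
    [PartialOrder X] [PartialOrder Y]
    (μ : Measure X) [IsProbabilityMeasure μ]
    (κ : Kernel X Y) [IsMarkovKernel κ]
    (hFKG : ∀ x : X, ∀ u v : Y → ℝ,
      Measurable u → Measurable v → Monotone u → Monotone v →
      (∃ C : ℝ, ∀ y, |u y| ≤ C) → (∃ C : ℝ, ∀ y, |v y| ≤ C) →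
      (∫ y, u y ∂κ x) * (∫ y, v y ∂κ x) ≤ ∫ y, u y * v y ∂κ x)
    (w : X × Y → ℝ) (hw : Measurable w) (hw0 : ∀ p, 0 ≤ w p)
    (hwbd : ∃ C : ℝ, ∀ p, |w p| ≤ C)
    (hwmono : Monotone w)
    (hw1 : ∫ x, ∫ y, w (x, y) ∂κ x ∂μ = 1) :
    ∀ F : X × Y → ℝ, Measurable F → (∃ C : ℝ, ∀ p, |F p| ≤ C) → Monotone F →
      ∫ x, (∫ y', F (x, y') ∂κ x) * (∫ y, w (x, y) ∂κ x) ∂μ ≤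
        ∫ x, ∫ y, F (x, y) * w (x, y) ∂κ x ∂μ := by
  intro F hF hFbd hFmono
  have hw_int : Integrable w (μ ⊗ₘ κ) :=
    .of_bound hw.aestronglyMeasurable _ (.of_forall hwbd.choose_spec)
  exact resampling_stochastically_decreases_general μ κ (.of_forall hFKG) w hw hw_int
    (fun x => hwbd.imp fun _ h y => h (x, y))
    (fun _ => hwmono.comp (monotone_const.prodMk monotone_id))
    F hF hFbd (fun _ => hFmono.comp (monotone_const.prodMk monotone_id))
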